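/- arXiv:2603.10522 — 2 statements merged into one kernel-verified Lean document; each statement's English description precedes it below -/
import Mathlib

section
/- Let (V, p, e) be a hyperbolic system of degree n ≥ 2 with hyperbolicity cone Λ₊, derivative polynomial p′ and corresponding eigenvalue map λ′. If c ∈ Λ₊ is a rank-one element with λ(c) = (α, 0, …, 0)ᵀ, α > 0, then there exists β with 0 < β < α such that λ′(c) = (β, 0, …, 0)ᵀ ∈ ℝ^{n−1}; in particular, c is a rank-one element of (V, p′, e). -/
open scoped BigOperators

/-- A hyperbolic system `(V, p, e)` of degree `n`: `p : V → ℝ` is homogeneous of degree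
`n`, `e ≠ 0`, `p e ≠ 0`, and for every `x ∈ V` the univariate polynomial
`t ↦ p (t • e - x)` has `n` real roots (counted with multiplicity), recorded in
decreasing order by the eigenvalue map `eig x : Fin n → ℝ`. -/
structure HypSys (V : Type*) [AddCommGroup V] [Module ℝ V] (n : ℕ) where
  p : V → ℝ
  e : V
  e_ne : e ≠ 0
  homog : ∀ (t : ℝ) (x : V), p (t • x) = t ^ n * p x
  pe_ne : p e ≠ 0
  eig : V → Fin n → ℝ
  eig_anti : ∀ x : V, Antitone (eig x)
  factor : ∀ (x : V) (t : ℝ), p (t • e - x) = p e * ∏ i, (t - eig x i)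

namespace HypSys

variable {V : Type*} [AddCommGroup V] [Module ℝ V] {n : ℕ}

/-- The hyperbolicity cone `Λ₊ = {x : λ(x) ≥ 0}`. -/
def cone (H : HypSys V n) : Set V := {x | ∀ i, 0 ≤ H.eig x i}

/-- The set `Λ₊₊ = {x : λ(x) > 0}` (the interior of the hyperbolicity cone). -/
def conePos (H : HypSys V n) : Set V := {x | ∀ i, 0 < H.eig x i}

/-- The semi-inner product induced by the eigenvalue map:
`⟨x, y⟩ = (1/4) (‖λ(x+y)‖² − ‖λ(x−y)‖²)`. -/
noncomputable def ip (H : HypSys V n) (x y : V) : ℝ :=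
  (1 / 4) * ((∑ i, (H.eig (x + y) i) ^ 2) - (∑ i, (H.eig (x - y) i) ^ 2))

/-- The trace `tr x = ⟨x, e⟩`. -/
noncomputable def tr (H : HypSys V n) (x : V) : ℝ := H.ip x H.e

/-- The rank of `x`: the number of nonzero entries of `λ(x)`. -/
noncomputable def rank (H : HypSys V n) (x : V) : ℕ :=
  (Finset.univ.filter fun i => H.eig x i ≠ 0).card

/-- A hyperbolic system is complete if `λ(x) = 0` implies `x = 0`. -/
def Complete (H : HypSys V n) : Prop := ∀ x : V, (∀ i, H.eig x i = 0) → x = 0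

/-- A primitive idempotent: an element with eigenvalue vector `(1, 0, …, 0)ᵀ`. -/
def IsPrimitive (H : HypSys V n) (c : V) : Prop :=
  ∀ i : Fin n, H.eig c i = if i.val = 0 then 1 else 0

/-- The derivative polynomial `p′(x) = (d/dt) p(t • e + x) |_{t = 0}`. -/
noncomputable def derivPoly (H : HypSys V n) : V → ℝ :=
  fun x => deriv (fun t : ℝ => H.p (t • H.e + x)) 0

end HypSys

/-!
The characteristic polynomial of `x` with respect to `(V, p′, e)` is the derivative of the one with
respect to `(V, p, e)`. For `c` the latter is `p(e) (t - α) tⁿ⁻¹`, whose derivative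
`n p(e) (t - β) tⁿ⁻²`, with `β = (n - 1) α / n`, exhibits `λ′(c) = (β, 0, …, 0)`.
-/

/-- The vector `(a, 0, …, 0)` of length `n` (empty if `n = 0`): the eigenvalue vector of an element
of `Λ₊` of rank at most one, written with `i.val = 0` so that it makes sense for every `n`. -/
def rankOneSpectrum {R : Type*} [Zero R] (n : ℕ) (a : R) : Fin n → R :=
  fun i => if i.val = 0 then a else 0

section Spectrum

open Polynomial

theorem antitone_rankOneSpectrum {R : Type*} [Zero R] [Preorder R] (n : ℕ) {a : R} (ha : 0 ≤ a) :
    Antitone (rankOneSpectrum n a) := by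
  intro i j hij
  unfold rankOneSpectrum
  split_ifs with hj hi hi
  · exact le_rfl
  · exact absurd (Nat.le_zero.1 (hj ▸ Fin.le_def.1 hij)) hi
  · exact ha
  · exact le_rfl

theorem card_filter_rankOneSpectrum_ne_zero {R : Type*} [Zero R] [DecidableEq R] (n : ℕ) {a : R}
    (ha : a ≠ 0) : (Finset.univ.filter fun i => rankOneSpectrum (n + 1) a i ≠ 0).card = 1 := by
  rw [Finset.card_eq_one]
  refine ⟨0, Finset.ext fun i => ?_⟩
  simp [rankOneSpectrum, ha, Fin.val_eq_zero_iff]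

theorem prod_X_sub_C_rankOneSpectrum {R : Type*} [CommRing R] (n : ℕ) (a : R) :
    ∏ i, (X - C (rankOneSpectrum (n + 1) a i)) = (X - C a) * X ^ n := by
  simp [Fin.prod_univ_succ, rankOneSpectrum]

theorem derivative_prod_X_sub_C_rankOneSpectrum {K : Type*} [Field K] [CharZero K] (n : ℕ) (a : K) :
    derivative (∏ i, (X - C (rankOneSpectrum (n + 1) a i))) =
      C ((n : K) + 1) * ∏ i, (X - C (rankOneSpectrum n (n / (n + 1) * a) i)) := by
  rw [prod_X_sub_C_rankOneSpectrum]
  cases n with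
  | zero => simp
  | succ m =>
    have hscale : ((m + 1 : ℕ) + 1 : K) * ((m + 1 : ℕ) / ((m + 1 : ℕ) + 1) * a) = (m + 1) * a := by
      have hne : ((m + 1 : ℕ) + 1 : K) ≠ 0 := Nat.cast_add_one_ne_zero _
      push_cast at hne ⊢
      field_simp
    have hscaleC := congrArg (C : K → K[X]) hscale
    rw [prod_X_sub_C_rankOneSpectrum, derivative_mul, derivative_X_sub_C, derivative_X_pow]
    simp only [C_mul, C_add, map_natCast, C_1, Nat.add_sub_cancel] at hscaleC ⊢
    push_cast at hscaleC ⊢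
    linear_combination X ^ m * hscaleC

theorem eq_of_antitone_of_map_univ_eq {R : Type*} [PartialOrder R] {n : ℕ} {f g : Fin n → R}
    (hf : Antitone f) (hg : Antitone g)
    (h : Finset.univ.val.map f = Finset.univ.val.map g) : f = g := by
  rw [Fin.univ_val_map, Fin.univ_val_map, Multiset.coe_eq_coe] at h
  exact List.ofFn_injective
    (h.eq_of_pairwise' hf.sortedGE_ofFn.pairwise hg.sortedGE_ofFn.pairwise)

theorem roots_C_mul_prod_X_sub_C {R ι : Type*} [CommRing R] [IsDomain R] [Fintype ι] {a : R}
    (ha : a ≠ 0) (f : ι → R) : (C a * ∏ i, (X - C (f i))).roots = Finset.univ.val.map f := by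
  rw [roots_C_mul _ ha, ← roots_multiset_prod_X_sub_C (Finset.univ.val.map f), Multiset.map_map]
  rfl

theorem eq_of_antitone_of_C_mul_prod_X_sub_C_eq {R : Type*} [CommRing R] [IsDomain R]
    [PartialOrder R] {n : ℕ} {f g : Fin n → R} {a b : R} (ha : a ≠ 0) (hf : Antitone f)
    (hg : Antitone g) (h : C a * ∏ i, (X - C (f i)) = C b * ∏ i, (X - C (g i))) : f = g := by
  have hb : b ≠ 0 := by
    rintro rfl
    simp [ha, Finset.prod_eq_zero_iff, X_sub_C_ne_zero] at h
  refine eq_of_antitone_of_map_univ_eq hf hg ?_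
  rw [← roots_C_mul_prod_X_sub_C ha, h, roots_C_mul_prod_X_sub_C hb]

end Spectrum

namespace HypSys

open Polynomial

variable {V : Type*} [AddCommGroup V] [Module ℝ V] {m n : ℕ}

/-- The characteristic polynomial of `x`, that is, `t ↦ p (t • e - x)` as a formal polynomial. It is
not normalised to be monic: its leading coefficient is `p e`. -/
noncomputable def charPoly (H : HypSys V n) (x : V) : ℝ[X] :=
  C (H.p H.e) * ∏ i, (X - C (H.eig x i))

theorem eval_charPoly (H : HypSys V n) (x : V) (t : ℝ) :
    (H.charPoly x).eval t = H.p (t • H.e - x) := by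
  simp [charPoly, H.factor, eval_prod]

theorem derivPoly_smul_sub (H : HypSys V n) (x : V) (t : ℝ) :
    H.derivPoly (t • H.e - x) = (derivative (H.charPoly x)).eval t := by
  calc H.derivPoly (t • H.e - x)
      = deriv (fun s => (H.charPoly x).eval (s + t)) 0 := by
        simp only [derivPoly, eval_charPoly, add_smul, add_sub_assoc]
    _ = (derivative (H.charPoly x)).eval t := by
        rw [deriv_comp_add_const (fun s => (H.charPoly x).eval s), zero_add, Polynomial.deriv]

theorem charPoly_eq_derivative_charPoly {H : HypSys V n} {H' : HypSys V m}
    (hp : H'.p = H.derivPoly) (he : H'.e = H.e) (x : V) :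
    H'.charPoly x = derivative (H.charPoly x) :=
  Polynomial.funext fun t => by rw [eval_charPoly, hp, he, derivPoly_smul_sub]

theorem eig_eq_of_charPoly_eq (H : HypSys V n) {x : V} {a : ℝ} {μ : Fin n → ℝ} (hμ : Antitone μ)
    (h : H.charPoly x = C a * ∏ i, (X - C (μ i))) : H.eig x = μ :=
  eq_of_antitone_of_C_mul_prod_X_sub_C_eq H.pe_ne (H.eig_anti x) hμ h

theorem eig_eq_rankOneSpectrum_of_derivPoly {H : HypSys V (n + 1)} {H' : HypSys V n}
    (hp : H'.p = H.derivPoly) (he : H'.e = H.e) {c : V} {α : ℝ} (hα : 0 ≤ α)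
    (hc : H.eig c = rankOneSpectrum (n + 1) α) :
    H'.eig c = rankOneSpectrum n (n / (n + 1) * α) := by
  refine H'.eig_eq_of_charPoly_eq (a := H.p H.e * (n + 1))
    (antitone_rankOneSpectrum n (by positivity)) ?_
  rw [charPoly_eq_derivative_charPoly hp he, charPoly, hc, derivative_C_mul,
    derivative_prod_X_sub_C_rankOneSpectrum, ← mul_assoc, ← C_mul]

theorem rank_eq_one_of_eig_eq_rankOneSpectrum (H : HypSys V (n + 1)) {x : V} {a : ℝ} (ha : a ≠ 0)
    (hx : H.eig x = rankOneSpectrum (n + 1) a) : H.rank x = 1 := by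
  rw [rank, hx]
  exact card_filter_rankOneSpectrum_ne_zero n ha

end HypSys

theorem statement7_general {V : Type*} [AddCommGroup V] [Module ℝ V] {n : ℕ} (hn : 2 ≤ n)
    (H : HypSys V n) (H' : HypSys V (n - 1)) (hp : H'.p = H.derivPoly) (he : H'.e = H.e)
    (c : V) (α : ℝ) (hα : 0 < α)
    (heig : ∀ i : Fin n, H.eig c i = if i.val = 0 then α else 0) :
    0 < ((n : ℝ) - 1) / n * α ∧ ((n : ℝ) - 1) / n * α < α ∧
      (∀ i : Fin (n - 1), H'.eig c i = if i.val = 0 then ((n : ℝ) - 1) / n * α else 0) ∧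
      H'.rank c = 1 := by
  obtain ⟨m, rfl⟩ : ∃ m, n = m + 2 := ⟨n - 2, by omega⟩
  have hfactor : ((m + 2 : ℕ) - 1 : ℝ) / (m + 2 : ℕ) = (m + 1 : ℕ) / ((m + 1 : ℕ) + 1) := by
    push_cast; ring
  rw [hfactor]
  have hspec : H'.eig c = rankOneSpectrum (m + 1) ((m + 1 : ℕ) / ((m + 1 : ℕ) + 1) * α) :=
    HypSys.eig_eq_rankOneSpectrum_of_derivPoly hp he hα.le (funext heig)
  have hpos : 0 < ((m + 1 : ℕ) / ((m + 1 : ℕ) + 1) * α : ℝ) := by positivity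
  have hlt : ((m + 1 : ℕ) / ((m + 1 : ℕ) + 1) : ℝ) < 1 :=
    (div_lt_one (by positivity)).2 (lt_add_one _)
  exact ⟨hpos, mul_lt_of_lt_one_left hα hlt, congrFun hspec,
    HypSys.rank_eq_one_of_eig_eq_rankOneSpectrum H' hpos.ne' hspec⟩

/-- if `n ≥ 2` and `c ∈ Λ₊` has `λ(c) = (α, 0, …, 0)ᵀ` with `α > 0`, then
there is `β` with `0 < β < α` such that `λ′(c) = (β, 0, …, 0)ᵀ ∈ ℝ^{n−1}`; in particular
`c` is a rank-one element of the derivative system `(V, p′, e)`. -/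
theorem statement7 {V : Type*} [AddCommGroup V] [Module ℝ V] [FiniteDimensional ℝ V]
    {n : ℕ} (hn : 2 ≤ n) (H : HypSys V n)
    (H' : HypSys V (n - 1)) (hp : H'.p = H.derivPoly) (he : H'.e = H.e)
    (c : V) (hc : c ∈ H.cone) (α : ℝ) (hα : 0 < α)
    (heig : ∀ i : Fin n, H.eig c i = if i.val = 0 then α else 0) :
    ∃ β : ℝ, 0 < β ∧ β < α ∧
      (∀ i : Fin (n - 1), H'.eig c i = if i.val = 0 then β else 0) ∧
      H'.rank c = 1 :=
  ⟨_, statement7_general hn H H' hp he c α hα heig⟩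
end

section
/- Let (V, p, e) be a hyperbolic system of degree n with hyperbolicity cone Λ₊, derivative polynomial p′, and derivative hyperbolicity cone Λ₊′. Then: (a) if c ∈ Λ₊ has rank k in (V, p, e), where 1 ≤ k ≤ n−1, then c ∈ Λ₊′ and c has rank k in (V, p′, e); (b) if c ∈ Λ₊′ has rank k in (V, p′, e), where 1 ≤ k ≤ n−3, then c ∈ Λ₊ and c has rank k in (V, p, e). -/
open scoped BigOperators

/-!
Up to the factor `n`, the derivative of the characteristic polynomial `t ↦ p (t • e - c) / p e` is
the characteristic polynomial of `c` in `(V, p′, e)`, so everything reduces to comparing a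
real-rooted polynomial `f` with `f'`. Its logarithmic derivative `f'/f = ∑ 1/(t - r)` is negative
to the left of all roots, so `f'` has no root there; conversely, by Rolle, if `f a = 0` and `f'` has
no root to the left of `a`, neither does `f`. The number of zero eigenvalues drops by one when
passing from `f` to `f'`, provided that `f 0 = 0`. In (b) this has to be proved: `f'` vanishes to
order at least two at `0`, whereas `(f'/f)' = -∑ 1/(t - r)²` shows that, away from the roots of
`f`, `f'` and `f''` do not vanish simultaneously.
-/

section RealRooted

open Polynomial

variable {K : Type*} [Field K] {f : K[X]}

theorem roots_ne_zero_of_derivative_ne_zero (hf : f.Splits) (hf' : f.derivative ≠ 0) :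
    f.roots ≠ 0 :=
  hf.roots_ne_zero fun h ↦ hf' (derivative_of_natDegree_zero h)

theorem sq_derivative_sub_mul_div_sq_eq_sum (hf : f.Splits) {x : K} (hx : f.eval x ≠ 0) :
    (f.derivative.eval x ^ 2 - f.eval x * f.derivative.derivative.eval x) / f.eval x ^ 2 =
      (f.roots.map fun r ↦ 1 / (x - r) ^ 2).sum := by
  induction hf using Submonoid.closure_induction with
  | mem f hf => rcases hf with ⟨a, rfl⟩ | ⟨a, rfl⟩ <;> simp
  | one => simp
  | mul f g _ _ ihf ihg =>
    obtain ⟨hfx, hgx⟩ : f.eval x ≠ 0 ∧ g.eval x ≠ 0 := by simpa using hx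
    have hfg : f * g ≠ 0 := by
      intro h
      simp [h] at hx
    rw [roots_mul hfg, Multiset.map_add, Multiset.sum_add, ← ihf hfx, ← ihg hgx]
    simp only [derivative_mul, derivative_add, eval_add, eval_mul]
    field_simp
    ring

variable [LinearOrder K] [IsStrictOrderedRing K]

theorem le_of_isRoot_derivative (hf : f.Splits) (hf' : f.derivative ≠ 0) {a x : K}
    (ha : ∀ r, f.IsRoot r → a ≤ r) (hx : f.derivative.IsRoot x) : a ≤ x := by
  by_contra! hxa
  have x_lt_root : ∀ r ∈ f.roots, x < r := fun r hr ↦ hxa.trans_le (ha r (isRoot_of_mem_roots hr))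
  have hfx : f.eval x ≠ 0 := fun h ↦ hxa.not_ge (ha x h)
  have hsum : (f.roots.map fun r ↦ 1 / (x - r)).sum < (f.roots.map fun _ ↦ (0 : K)).sum :=
    Multiset.sum_lt_sum_of_nonempty (roots_ne_zero_of_derivative_ne_zero hf hf') fun r hr ↦
      one_div_neg.2 (sub_neg.2 (x_lt_root r hr))
  rw [← hf.eval_derivative_div_eval_of_ne_zero hfx, hx.eq_zero, zero_div,
    Multiset.sum_map_zero] at hsum
  exact hsum.false

theorem isRoot_of_one_lt_rootMultiplicity_derivative (hf : f.Splits) {x : K}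
    (hx : 1 < f.derivative.rootMultiplicity x) : f.IsRoot x := by
  have hf' : f.derivative ≠ 0 := by
    intro h
    simp [h] at hx
  obtain ⟨hx₁, hx₂⟩ := (one_lt_rootMultiplicity_iff_isRoot hf').1 hx
  by_contra hfx
  have hsum : (f.roots.map fun _ ↦ (0 : K)).sum < (f.roots.map fun r ↦ 1 / (x - r) ^ 2).sum := by
    refine Multiset.sum_lt_sum_of_nonempty
      (roots_ne_zero_of_derivative_ne_zero hf hf') fun r hr ↦ ?_
    have hxr : x ≠ r := fun h ↦ hfx (h ▸ isRoot_of_mem_roots hr)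
    exact one_div_pos.2 (sq_pos_of_ne_zero (sub_ne_zero.2 hxr))
  rw [← sq_derivative_sub_mul_div_sq_eq_sum hf hfx, hx₁.eq_zero, hx₂.eq_zero,
    Multiset.sum_map_zero] at hsum
  simp at hsum

theorem le_of_isRoot_of_forall_isRoot_derivative {f : ℝ[X]} {a r : ℝ} (ha : f.IsRoot a)
    (hf' : ∀ x, f.derivative.IsRoot x → a ≤ x) (hr : f.IsRoot r) : a ≤ r := by
  by_contra! hra
  obtain ⟨x, hx, hx'⟩ := exists_deriv_eq_zero hra f.continuousOn (hr.eq_zero.trans ha.eq_zero.symm)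
  exact hx.2.not_ge (hf' x (f.deriv.symm.trans hx'))

end RealRooted

namespace HypSys

open Polynomial

variable {V : Type*} [AddCommGroup V] [Module ℝ V] {n : ℕ}

/-- The characteristic polynomial `t ↦ p (t • e - x) / p e` of `x`, given by its factorization
into linear factors. -/
noncomputable def charpoly (H : HypSys V n) (x : V) : ℝ[X] := ∏ i, (X - C (H.eig x i))

theorem p_smul_e_sub (H : HypSys V n) (x : V) (t : ℝ) :
    H.p (t • H.e - x) = H.p H.e * (H.charpoly x).eval t := by
  simp [H.factor, charpoly, eval_prod]

theorem charpoly_ne_zero (H : HypSys V n) (x : V) : H.charpoly x ≠ 0 :=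
  Finset.prod_ne_zero_iff.2 fun _ _ ↦ X_sub_C_ne_zero _

theorem splits_charpoly (H : HypSys V n) (x : V) : (H.charpoly x).Splits :=
  Splits.prod fun _ _ ↦ Splits.X_sub_C _

theorem roots_charpoly (H : HypSys V n) (x : V) :
    (H.charpoly x).roots = Finset.univ.val.map (H.eig x) := by
  simp [charpoly, roots_prod _ _ (H.charpoly_ne_zero x), Multiset.bind_singleton]

theorem isRoot_charpoly_iff (H : HypSys V n) (x : V) (t : ℝ) :
    (H.charpoly x).IsRoot t ↔ ∃ i, H.eig x i = t := by
  rw [← mem_roots (H.charpoly_ne_zero x), roots_charpoly]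
  simp only [Multiset.mem_map, Finset.mem_val, Finset.mem_univ, true_and]

theorem mem_cone_iff (H : HypSys V n) (x : V) :
    x ∈ H.cone ↔ ∀ t, (H.charpoly x).IsRoot t → 0 ≤ t := by
  simp only [cone, Set.mem_ofPred_eq, isRoot_charpoly_iff, forall_exists_index,
    forall_apply_eq_imp_iff]

theorem rank_add_rootMultiplicity_charpoly (H : HypSys V n) (x : V) :
    H.rank x + (H.charpoly x).rootMultiplicity 0 = n := by
  have hmult : (H.charpoly x).rootMultiplicity 0 =
      (Finset.univ.filter fun i ↦ ¬ H.eig x i ≠ 0).card := by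
    simp only [← count_roots, roots_charpoly, Multiset.count_map, Finset.card_def,
      Finset.filter_val, not_not, eq_comm]
  rw [hmult, rank, Finset.card_filter_add_card_filter_not, Finset.card_univ, Fintype.card_fin]

theorem isRoot_charpoly_zero_iff (H : HypSys V n) (x : V) :
    (H.charpoly x).IsRoot 0 ↔ H.rank x < n := by
  rw [← rootMultiplicity_pos (H.charpoly_ne_zero x)]
  have := H.rank_add_rootMultiplicity_charpoly x
  lia

theorem derivPoly_smul_e_sub (H : HypSys V n) (x : V) (t : ℝ) :
    H.derivPoly (t • H.e - x) = H.p H.e * (H.charpoly x).derivative.eval t := by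
  have hshift : (fun s : ℝ ↦ H.p (s • H.e + (t • H.e - x))) =
      fun s ↦ H.p H.e * (H.charpoly x).eval (s + t) := by
    funext s
    rw [← add_sub_assoc, ← add_smul, p_smul_e_sub]
  rw [derivPoly, hshift, deriv_const_mul_field,
    deriv_comp_add_const (fun s ↦ (H.charpoly x).eval s), zero_add, Polynomial.deriv]

theorem derivPoly_e (H : HypSys V n) : H.derivPoly H.e = n * H.p H.e := by
  have hpow : (fun t : ℝ ↦ H.p (t • H.e + H.e)) = fun t ↦ (t + 1) ^ n * H.p H.e := by
    funext t
    rw [← H.homog, add_smul, one_smul]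
  simp [derivPoly, hpow]

section Derivative

variable {H : HypSys V n} {H' : HypSys V (n - 1)} (hp : H'.p = H.derivPoly) (he : H'.e = H.e)

include hp he

theorem degree_ne_zero_of_derivPoly : n ≠ 0 := by
  rintro rfl
  exact H'.pe_ne (by simp [hp, he, derivPoly_e])

theorem derivative_charpoly (c : V) :
    (H.charpoly c).derivative = C (n : ℝ) * H'.charpoly c := by
  refine Polynomial.funext fun t ↦ mul_left_cancel₀ H.pe_ne ?_
  calc H.p H.e * (H.charpoly c).derivative.eval t
      = H'.p (t • H'.e - c) := by rw [hp, he, derivPoly_smul_e_sub]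
    _ = n * H.p H.e * (H'.charpoly c).eval t := by rw [p_smul_e_sub, hp, he, derivPoly_e]
    _ = H.p H.e * (C (n : ℝ) * H'.charpoly c).eval t := by rw [eval_mul, eval_C]; ring

theorem derivative_charpoly_ne_zero (c : V) : (H.charpoly c).derivative ≠ 0 := by
  rw [derivative_charpoly hp he]
  exact mul_ne_zero (C_ne_zero.2 (Nat.cast_ne_zero.2 (degree_ne_zero_of_derivPoly hp he)))
    (H'.charpoly_ne_zero c)

theorem roots_derivative_charpoly (c : V) :
    (H.charpoly c).derivative.roots = (H'.charpoly c).roots := by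
  rw [derivative_charpoly hp he,
    roots_C_mul _ (Nat.cast_ne_zero.2 (degree_ne_zero_of_derivPoly hp he))]

theorem isRoot_derivative_charpoly_iff (c : V) (t : ℝ) :
    (H.charpoly c).derivative.IsRoot t ↔ (H'.charpoly c).IsRoot t := by
  rw [← mem_roots (derivative_charpoly_ne_zero hp he c), roots_derivative_charpoly hp he,
    mem_roots (H'.charpoly_ne_zero c)]

theorem rootMultiplicity_derivative_charpoly (c : V) (t : ℝ) :
    (H.charpoly c).derivative.rootMultiplicity t = (H'.charpoly c).rootMultiplicity t := by
  rw [← count_roots, roots_derivative_charpoly hp he, count_roots]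

theorem cone_subset_cone_derivPoly : H.cone ⊆ H'.cone := by
  intro c hc
  rw [mem_cone_iff] at hc ⊢
  intro t ht
  exact le_of_isRoot_derivative (H.splits_charpoly c) (derivative_charpoly_ne_zero hp he c) hc
    ((isRoot_derivative_charpoly_iff hp he c t).2 ht)

variable {c : V}

theorem mem_cone_of_mem_cone_derivPoly (hrank : H.rank c < n) (hc : c ∈ H'.cone) :
    c ∈ H.cone := by
  rw [mem_cone_iff] at hc ⊢
  intro t
  exact le_of_isRoot_of_forall_isRoot_derivative ((H.isRoot_charpoly_zero_iff c).2 hrank)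
    fun s hs ↦ hc s ((isRoot_derivative_charpoly_iff hp he c s).1 hs)

theorem rank_derivPoly (hrank : H.rank c < n) : H'.rank c = H.rank c := by
  have hmult : (H'.charpoly c).rootMultiplicity 0 = (H.charpoly c).rootMultiplicity 0 - 1 := by
    rw [← rootMultiplicity_derivative_charpoly hp he,
      derivative_rootMultiplicity_of_root ((H.isRoot_charpoly_zero_iff c).2 hrank)]
  have := H.rank_add_rootMultiplicity_charpoly c
  have := H'.rank_add_rootMultiplicity_charpoly c
  lia

theorem rank_lt_of_rank_derivPoly_lt (hrank : H'.rank c + 2 < n) : H.rank c < n := by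
  have hmult : 1 < (H.charpoly c).derivative.rootMultiplicity 0 := by
    rw [rootMultiplicity_derivative_charpoly hp he]
    have := H'.rank_add_rootMultiplicity_charpoly c
    lia
  exact (H.isRoot_charpoly_zero_iff c).1
    (isRoot_of_one_lt_rootMultiplicity_derivative (H.splits_charpoly c) hmult)

end Derivative

end HypSys

theorem statement8_general {V : Type*} [AddCommGroup V] [Module ℝ V] {n : ℕ} (H : HypSys V n)
    (H' : HypSys V (n - 1)) (hp : H'.p = H.derivPoly) (he : H'.e = H.e) (c : V) :
    (H.rank c < n → c ∈ H.cone → c ∈ H'.cone ∧ H'.rank c = H.rank c) ∧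
      (H'.rank c + 2 < n → c ∈ H'.cone → c ∈ H.cone ∧ H.rank c = H'.rank c) := by
  refine ⟨fun hrank hc ↦ ⟨HypSys.cone_subset_cone_derivPoly hp he hc,
    HypSys.rank_derivPoly hp he hrank⟩, fun hrank' hc ↦ ?_⟩
  have hrank := HypSys.rank_lt_of_rank_derivPoly_lt hp he hrank'
  exact ⟨HypSys.mem_cone_of_mem_cone_derivPoly hp he hrank hc,
    (HypSys.rank_derivPoly hp he hrank).symm⟩

/-- (a) if `c ∈ Λ₊` has rank `k` in `(V, p, e)` with `1 ≤ k ≤ n − 1`, then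
`c ∈ Λ₊′` and `c` has rank `k` in `(V, p′, e)`; (b) if `c ∈ Λ₊′` has rank `k` in
`(V, p′, e)` with `1 ≤ k ≤ n − 3`, then `c ∈ Λ₊` and `c` has rank `k` in `(V, p, e)`. -/
theorem statement8 {V : Type*} [AddCommGroup V] [Module ℝ V] [FiniteDimensional ℝ V]
    {n : ℕ} (H : HypSys V n)
    (H' : HypSys V (n - 1)) (hp : H'.p = H.derivPoly) (he : H'.e = H.e)
    (c : V) (k : ℕ) :
    ((1 ≤ k → k ≤ n - 1 → c ∈ H.cone → H.rank c = k →
        c ∈ H'.cone ∧ H'.rank c = k) ∧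
      (1 ≤ k → k ≤ n - 3 → c ∈ H'.cone → H'.rank c = k →
        c ∈ H.cone ∧ H.rank c = k)) := by
  obtain ⟨ha, hb⟩ := statement8_general H H' hp he c
  exact ⟨fun _ _ hc hk ↦ hk ▸ ha (by lia) hc, fun _ _ hc hk ↦ hk ▸ hb (by lia) hc⟩
end
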